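/- The distributed shortcutting algorithm B, applied to a walk P from v_1 to v_r in which vis is initialized to true at v_r and false elsewhere, terminates with a path P' in which every vertex of P appears exactly once; i.e., all occurrences of each non-terminal vertex after its first occurrence, and all occurrences of the terminal vertex except its last, are shortcutted. -/

import Mathlib

/-- Sequential abstraction of the distributed shortcutting algorithm `B`: scan
the sequence left to right, deleting (shortcutting) every occurrence of a
vertex that has already been seen, reconnecting the neighbours. -/
def shortcutDedup {V : Type*} [DecidableEq V] (seen : Finset V) : List V → List V
  | [] => []
  | a :: l => if a ∈ seen then shortcutDedup seen l
              else a :: shortcutDedup (insert a seen) l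

section eraseDups

variable {α : Type*} [BEq α]

theorem nodup_eraseDups [LawfulBEq α] (l : List α) : l.eraseDups.Nodup := by
  induction hn : l.length using Nat.strong_induction_on generalizing l with
  | h n ih =>
    cases l with
    | nil => exact List.nodup_nil
    | cons a l =>
      have length_lt : (l.filter fun b ↦ !b == a).length < n :=
        hn ▸ Nat.lt_succ_of_le (List.length_filter_le _ l)
      have notMem_tail : a ∉ (l.filter fun b ↦ !b == a).eraseDups := by simp [List.mem_eraseDups]
      rw [List.eraseDups_cons]
      exact List.nodup_cons.mpr ⟨notMem_tail, ih _ length_lt _ rfl⟩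

theorem head?_eraseDups (l : List α) : l.eraseDups.head? = l.head? := by
  cases l with
  | nil => rfl
  | cons a l => rw [List.eraseDups_cons, List.head?_cons, List.head?_cons]

end eraseDups

section shortcutDedup

variable {V : Type*} [DecidableEq V]

theorem shortcutDedup_eq_eraseDups_filter (seen : Finset V) (l : List V) :
    shortcutDedup seen l = (l.filter (· ∉ seen)).eraseDups := by
  induction l generalizing seen with
  | nil => rfl
  | cons a l ih =>
    by_cases ha : a ∈ seen
    · simp [shortcutDedup, ha, ih]
    · have filter_insert :
          l.filter (· ∉ insert a seen) = (l.filter (· ∉ seen)).filter (fun b ↦ !b == a) := by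
        rw [List.filter_filter]
        exact List.filter_congr fun b _ ↦ by grind
      rw [shortcutDedup, if_neg ha, ih, filter_insert, List.filter_cons_of_pos (by simpa using ha),
        List.eraseDups_cons]

theorem mem_shortcutDedup {seen : Finset V} {l : List V} {x : V} :
    x ∈ shortcutDedup seen l ↔ x ∈ l ∧ x ∉ seen := by
  simp [shortcutDedup_eq_eraseDups_filter, List.mem_eraseDups]

theorem toFinset_shortcutDedup (seen : Finset V) (l : List V) :
    (shortcutDedup seen l).toFinset = l.toFinset \ seen := by
  ext x
  simp [mem_shortcutDedup]

theorem nodup_shortcutDedup (seen : Finset V) (l : List V) : (shortcutDedup seen l).Nodup := by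
  rw [shortcutDedup_eq_eraseDups_filter]
  exact nodup_eraseDups _

theorem head?_shortcutDedup (seen : Finset V) (l : List V) :
    (shortcutDedup seen l).head? = l.find? (· ∉ seen) := by
  rw [shortcutDedup_eq_eraseDups_filter, head?_eraseDups, List.head?_filter]

end shortcutDedup

/-- The distributed shortcutting algorithm `B`, applied to a walk `P` from `v₁`
to `v_r` where `vis` is initialised to true at `v_r` and false elsewhere (so all
occurrences of a non-terminal vertex after its first, and all occurrences of the
terminal vertex except its last, are shortcut), terminates with a path `P'` in
which every vertex of `P` appears exactly once, still from `v₁` to `v_r`. -/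
theorem shortcut_algorithm_correct {V : Type*} [DecidableEq V]
    (P : List V) (v1 vr : V) (hne : P ≠ [])
    (hh : P.head? = some v1) (hl : P.getLast? = some vr) (h1r : v1 ≠ vr) :
    let P' := shortcutDedup {vr} P.dropLast ++ [vr]
    P'.Nodup ∧ P'.toFinset = P.toFinset ∧
      P'.head? = some v1 ∧ P'.getLast? = some vr := by
  obtain ⟨Q, rfl⟩ := List.getLast?_eq_some_iff.mp hl
  rw [List.dropLast_concat]
  intro P'
  have vr_notMem : vr ∉ shortcutDedup {vr} Q := by simp [mem_shortcutDedup]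
  have head_dedup : (shortcutDedup {vr} Q).head? = some v1 := by
    cases Q with
    | nil => exact absurd (Option.some.inj hh).symm h1r
    | cons a t =>
      obtain rfl : a = v1 := Option.some.inj hh
      rw [head?_shortcutDedup, List.find?_cons_of_pos (by simpa using h1r)]
  refine ⟨?nodup, ?vertices, ?head, List.getLast?_concat⟩
  case nodup => simpa [P'] using (nodup_shortcutDedup {vr} Q).concat vr_notMem
  case vertices => simp [P', toFinset_shortcutDedup]
  case head => rw [List.head?_append, head_dedup, Option.some_or]
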